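/- Let k = 3 + 2l + 1/2 if l ≥ −3/4 and k = 2 if −1 < l < −3/4. Suppose there exists η̌ > 0 such that σ'(η) ≥ 1/(2(3+2l)) + k·σ(η) for all 0 < η ≤ η̌. Then every regular solution of the static Einstein–Vlasov equations whose central value η_c satisfies η_c < η̌ has finite radius and finite mass: its maximal interval of definition is (0,R) with R < ∞ and sup_{0<r<R} m(r) < ∞. -/

import Mathlib

open Filter Set MeasureTheory

/-- The kinetic integrals `g_i(η) = ∫_{e^{-η}}^1 φ(ℰ) [(ℰ² - e^{-2η})/2]^i dℰ`. -/
noncomputable def gfun (φ : ℝ → ℝ) (i η : ℝ) : ℝ :=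
  ∫ E in Real.exp (-η)..1, φ E * (((E ^ 2 - Real.exp (-2 * η)) / 2) ^ i)

/-- The constant `a = 2^{l+3/2} π^{3/2} Γ(l+1) / ((l+3/2) Γ(l+3/2))`. -/
noncomputable def acoef (l : ℝ) : ℝ :=
  (2 : ℝ) ^ (l + 3 / 2) * Real.pi ^ ((3 : ℝ) / 2) * Real.Gamma (l + 1) /
    ((l + 3 / 2) * Real.Gamma (l + 3 / 2))

/-- The radial pressure `p_rad(r,η) = a r^{2l} e^{(2l+4)η} g_{l+3/2}(η)`. -/
noncomputable def pRad (φ : ℝ → ℝ) (l r η : ℝ) : ℝ :=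
  acoef l * r ^ (2 * l) * Real.exp ((2 * l + 4) * η) * gfun φ (l + 3 / 2) η

/-- The energy density `ρ(r,η)`. -/
noncomputable def rhoFun (φ : ℝ → ℝ) (l r η : ℝ) : ℝ :=
  (l + 3 / 2) * acoef l * r ^ (2 * l) * Real.exp ((2 * l + 4) * η) *
    (2 * gfun φ (l + 3 / 2) η + Real.exp (-2 * η) * gfun φ (l + 1 / 2) η)

/-- `σ(η) = p_rad/ρ`. -/
noncomputable def sigmaFun (φ : ℝ → ℝ) (l η : ℝ) : ℝ :=
  (1 / (3 + 2 * l)) * gfun φ (l + 3 / 2) η /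
    (gfun φ (l + 3 / 2) η + (1 / 2) * Real.exp (-2 * η) * gfun φ (l + 1 / 2) η)

/-- A solution of the static Einstein–Vlasov equations on `{r | r₁ < r < R}`. -/
def IsEVSolution (φ : ℝ → ℝ) (l : ℝ) (m ηf : ℝ → ℝ) (r₁ : ℝ) (R : EReal) : Prop :=
  ∀ r : ℝ, r₁ < r → (r : EReal) < R →
    0 < ηf r ∧ 0 < m r ∧ 2 * m r < r ∧
    HasDerivAt m (4 * Real.pi * r ^ 2 * rhoFun φ l r (ηf r)) r ∧
    HasDerivAt ηf
      (-((1 - 2 * m r / r)⁻¹ * (m r / r + 4 * Real.pi * r ^ 2 * pRad φ l r (ηf r))) / r) r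

/-!
In the logarithmic radius `t = log r`, the variables `u = 4πr³ρ/m` and `v = m/((r - 2m)σ)` of a
regular solution with `R = ∞` form a planar system driven by `σ` and `σ'`, whose orbit comes out of
the point `(N, 0)`, `N = 3 + 2l`, as `t → -∞`. The growth condition on `σ'` makes the line through
`(N, 0)` and `(0, 2N)` a barrier: the excess `u + v/2 - N` becomes positive at once and stays
positive, which in turn makes `v` increasing. If `v` were bounded by `2N`, the function
`(u + v/2 - N) v^{N/(N-1)}` would keep the excess away from zero, and then `v` would grow linearly.
So `v` exceeds `2N`, from where on `v̇ ≥ c v²`, and `v` blows up at a finite radius.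

The system needs the derivative of `g_{l+3/2}`, which comes from Fubini's theorem:
`g_i(η) = ∫_0^η i e^{-2θ} g_{i-1}(θ) dθ`. The continuity of the integrand for `i = l + 3/2` is not
available directly when `l ≤ -1/2`; it follows from that of `σ`, since `σ` and `g_{l+3/2}`
determine `g_{l+1/2}`.
-/

open Real Topology Asymptotics

section Integrability

lemma isBigO_sub_rpow_of_le {f : ℝ → ℝ} {a b p C : ℝ} (hab : a < b)
    (hf : ∀ x ∈ Ioo a b, 0 ≤ f x) (hle : ∀ x ∈ Ioo a b, f x ≤ C * (b - x) ^ p) :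
    f =O[𝓝[<] b] fun x ↦ (b - x) ^ p := by
  refine IsBigO.of_bound C ?_
  filter_upwards [Ioo_mem_nhdsLT hab] with x hx
  rw [norm_of_nonneg (hf x hx), norm_of_nonneg (rpow_nonneg (sub_pos.2 hx.2).le p)]
  exact hle x hx

lemma integrableOn_Ioo_of_isBigO_rpow {f : ℝ → ℝ} {a b p : ℝ} (hf : ContinuousOn f (Ico a b))
    (hp : -1 < p) (hO : f =O[𝓝[<] b] fun x ↦ (b - x) ^ p) : IntegrableOn f (Ioo a b) := by
  rcases le_or_gt b a with hab | hab
  · simp [Ioo_eq_empty_of_le hab]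
  have hmeas : StronglyMeasurableAtFilter f (𝓝[<] b) :=
    ⟨Ioo a b, Ioo_mem_nhdsLT hab,
      (hf.mono Ioo_subset_Ico_self).aestronglyMeasurable measurableSet_Ioo⟩
  have hrpow : IntegrableOn (fun x ↦ (b - x) ^ p) (Ioo a b) := by
    rw [← intervalIntegrable_iff_integrableOn_Ioo_of_le hab.le]
    simpa using (intervalIntegral.intervalIntegrable_rpow' hp).comp_sub_left
      (a := b - a) (b := 0) b
  obtain ⟨s, hs, hfs⟩ := hO.integrableAtFilter hmeas ⟨Ioo a b, Ioo_mem_nhdsLT hab, hrpow⟩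
  obtain ⟨c, hc, hcs⟩ := (mem_nhdsLT_iff_exists_mem_Ico_Ioo_subset hab).1 hs
  have hleft : IntegrableOn f (Icc a c) :=
    (hf.mono (Icc_subset_Ico_right hc.2)).integrableOn_Icc
  exact (hleft.union (hfs.mono_set hcs)).mono_set fun x hx ↦
    (le_or_gt x c).imp (fun h ↦ ⟨hx.1.le, h⟩) fun h ↦ ⟨h, hx.2⟩

end Integrability

section KineticIntegrals

variable {φ : ℝ → ℝ} {i E η θ : ℝ}

lemma exp_neg_two_mul (x : ℝ) : exp (-2 * x) = exp (-x) ^ 2 := by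
  rw [← exp_nat_mul]
  ring_nf

lemma sq_sub_exp_nonneg (hE : exp (-θ) ≤ E) : 0 ≤ (E ^ 2 - exp (-2 * θ)) / 2 := by
  rw [exp_neg_two_mul]
  have := pow_le_pow_left₀ (exp_pos (-θ)).le hE 2
  linarith

lemma sq_sub_exp_pos (hE : exp (-θ) < E) : 0 < (E ^ 2 - exp (-2 * θ)) / 2 := by
  rw [exp_neg_two_mul]
  have := pow_lt_pow_left₀ hE (exp_pos (-θ)).le two_ne_zero
  linarith

lemma exp_neg_lt_iff (hE : 0 < E) : exp (-θ) < E ↔ -log E < θ := by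
  rw [← lt_log_iff_exp_lt hE, neg_lt]

/-- The derivative `∂_θ ((E² - e^{-2θ})/2)^i`, extended by zero to the region `E ≤ e^{-θ}`. It is
the kernel that produces `g_i` from `φ` by integrating over `E` and over `0 < θ < η`. -/
noncomputable def kineticKernel (i E θ : ℝ) : ℝ :=
  if exp (-θ) < E then i * exp (-2 * θ) * ((E ^ 2 - exp (-2 * θ)) / 2) ^ (i - 1) else 0

lemma kineticKernel_nonneg (hi : 0 ≤ i) : 0 ≤ kineticKernel i E θ := by
  rw [kineticKernel]
  split_ifs with hE
  · exact mul_nonneg (by positivity) (rpow_nonneg (sq_sub_exp_nonneg hE.le) _)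
  · rfl

lemma measurable_kineticKernel (i : ℝ) : Measurable (Function.uncurry (kineticKernel i)) :=
  Measurable.ite (measurableSet_lt (by fun_prop) (by fun_prop)) (by fun_prop) measurable_const

lemma hasDerivAt_sq_sub_exp_rpow (i : ℝ) (hE : exp (-θ) < E) :
    HasDerivAt (fun θ ↦ ((E ^ 2 - exp (-2 * θ)) / 2) ^ i) (kineticKernel i E θ) θ := by
  have hbase : HasDerivAt (fun θ ↦ (E ^ 2 - exp (-2 * θ)) / 2) (exp (-2 * θ)) θ :=
    (((((hasDerivAt_id θ).const_mul (-2)).exp).const_sub (E ^ 2)).div_const 2).congr_deriv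
      (by simp)
  refine (hbase.rpow_const (p := i) (Or.inl (sq_sub_exp_pos hE).ne')).congr_deriv ?_
  rw [kineticKernel, if_pos hE]
  ring

lemma continuous_sq_sub_exp_rpow (hi : 0 ≤ i) (E : ℝ) :
    Continuous fun θ ↦ ((E ^ 2 - exp (-2 * θ)) / 2) ^ i :=
  (by fun_prop : Continuous fun θ ↦ (E ^ 2 - exp (-2 * θ)) / 2).rpow_const fun _ ↦ Or.inr hi

lemma integrableOn_Ioc_kineticKernel (hi : 0 ≤ i) (hE : 0 < E) :
    IntegrableOn (kineticKernel i E) (Ioc (-log E) η) :=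
  intervalIntegral.integrableOn_deriv_of_nonneg (continuous_sq_sub_exp_rpow hi E).continuousOn
    (fun _ hθ ↦ hasDerivAt_sq_sub_exp_rpow i ((exp_neg_lt_iff hE).2 hθ.1))
    fun _ _ ↦ kineticKernel_nonneg hi

lemma setIntegral_Ioc_kineticKernel (hi : 0 < i) (hE : 0 < E) (hEη : exp (-η) < E) :
    ∫ θ in Ioc (-log E) η, kineticKernel i E θ = ((E ^ 2 - exp (-2 * η)) / 2) ^ i := by
  have hle : -log E ≤ η := ((exp_neg_lt_iff hE).1 hEη).le
  have hzero : ((E ^ 2 - exp (-2 * -log E)) / 2) ^ i = 0 := by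
    rw [exp_neg_two_mul, neg_neg, exp_log hE, sub_self, zero_div, zero_rpow hi.ne']
  rw [← intervalIntegral.integral_of_le hle,
    intervalIntegral.integral_eq_sub_of_hasDerivAt_of_le hle
      (continuous_sq_sub_exp_rpow hi.le E).continuousOn
      (fun _ hθ ↦ hasDerivAt_sq_sub_exp_rpow i ((exp_neg_lt_iff hE).2 hθ.1))
      ((intervalIntegrable_iff_integrableOn_Ioc_of_le hle).2
        (integrableOn_Ioc_kineticKernel hi.le hE)), hzero, sub_zero]

lemma kineticKernel_eq_indicator (i : ℝ) (hE : 0 < E) :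
    kineticKernel i E = (Ioi (-log E)).indicator (kineticKernel i E) := by
  refine (indicator_eq_self.2 fun θ hθ ↦ ?_).symm
  by_contra h
  exact hθ (if_neg fun hlt ↦ h ((exp_neg_lt_iff hE).1 hlt))

lemma Ioc_zero_inter_Ioi_neg_log (hE : 0 ≤ E) (hE1 : E ≤ 1) :
    Ioc 0 η ∩ Ioi (-log E) = Ioc (-log E) η := by
  rw [Ioc_inter_Ioi, sup_of_le_right (neg_nonneg.2 (log_nonpos hE hE1))]

lemma integrableOn_kineticKernel (hi : 0 ≤ i) (hE : 0 < E) (hE1 : E ≤ 1) :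
    IntegrableOn (kineticKernel i E) (Ioc 0 η) := by
  rw [kineticKernel_eq_indicator i hE, integrableOn_indicator_iff measurableSet_Ioi, inter_comm,
    Ioc_zero_inter_Ioi_neg_log hE.le hE1]
  exact integrableOn_Ioc_kineticKernel hi hE

lemma setIntegral_kineticKernel (hi : 0 < i) (hEη : exp (-η) < E) (hE1 : E ≤ 1) :
    ∫ θ in Ioc 0 η, kineticKernel i E θ = ((E ^ 2 - exp (-2 * η)) / 2) ^ i := by
  have hE : 0 < E := (exp_pos _).trans hEη
  rw [kineticKernel_eq_indicator i hE, setIntegral_indicator measurableSet_Ioi,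
    Ioc_zero_inter_Ioi_neg_log hE.le hE1, setIntegral_Ioc_kineticKernel hi hE hEη]

lemma gfun_eq_setIntegral_Ioo (φ : ℝ → ℝ) (i : ℝ) (hη : 0 ≤ η) :
    gfun φ i η = ∫ E in Ioo (exp (-η)) 1, φ E * ((E ^ 2 - exp (-2 * η)) / 2) ^ i := by
  rw [gfun, intervalIntegral.integral_of_le (exp_le_one_iff.2 (neg_nonpos.2 hη)),
    integral_Ioc_eq_integral_Ioo]

lemma gfun_nonneg (hφ : ∀ x ∈ Ioo (0 : ℝ) 1, 0 ≤ φ x) (i : ℝ) (hη : 0 ≤ η) :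
    0 ≤ gfun φ i η := by
  rw [gfun_eq_setIntegral_Ioo φ i hη]
  exact setIntegral_nonneg measurableSet_Ioo fun E hE ↦
    mul_nonneg (hφ E ⟨(exp_pos _).trans hE.1, hE.2⟩) (rpow_nonneg (sq_sub_exp_nonneg hE.1.le) _)

lemma setIntegral_mul_kineticKernel (φ : ℝ → ℝ) (i : ℝ) (hθ : 0 ≤ θ) (hθη : θ ≤ η) :
    ∫ E in Ioo (exp (-η)) 1, φ E * kineticKernel i E θ =
      i * exp (-2 * θ) * gfun φ (i - 1) θ := by
  have hindicator : (fun E ↦ φ E * kineticKernel i E θ) = (Ioi (exp (-θ))).indicator fun E ↦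
      i * exp (-2 * θ) * (φ E * ((E ^ 2 - exp (-2 * θ)) / 2) ^ (i - 1)) := by
    funext E
    simp only [kineticKernel, indicator, mem_Ioi]
    split_ifs <;> ring
  have hinter : Ioo (exp (-η)) 1 ∩ Ioi (exp (-θ)) = Ioo (exp (-θ)) 1 := by
    rw [Ioo_inter_Ioi, sup_of_le_right (exp_le_exp.2 (neg_le_neg hθη))]
  rw [hindicator, setIntegral_indicator measurableSet_Ioi, hinter, integral_const_mul,
    gfun_eq_setIntegral_Ioo φ _ hθ]

lemma integrableOn_mul_sq_sub_exp_rpow (hφ : IntegrableOn φ (Ioo (exp (-η)) 1)) (hi : 0 ≤ i) :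
    IntegrableOn (fun E ↦ φ E * ((E ^ 2 - exp (-2 * η)) / 2) ^ i) (Ioo (exp (-η)) 1) := by
  refine hφ.mul_bdd (c := 1) (by fun_prop) ?_
  filter_upwards [ae_restrict_mem measurableSet_Ioo] with E hE
  have hnonneg := sq_sub_exp_nonneg hE.1.le
  rw [norm_of_nonneg (rpow_nonneg hnonneg _)]
  refine rpow_le_one hnonneg ?_ hi
  have := pow_le_one₀ ((exp_pos _).trans hE.1).le hE.2.le (n := 2)
  linarith [exp_pos (-2 * η)]

lemma integrable_mul_kineticKernel (hφint : IntegrableOn φ (Ioo (exp (-η)) 1)) (hi : 0 < i) :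
    Integrable (fun p : ℝ × ℝ ↦ φ p.1 * kineticKernel i p.1 p.2)
      ((volume.restrict (Ioo (exp (-η)) 1)).prod (volume.restrict (Ioc 0 η))) := by
  have hmeas : AEStronglyMeasurable (fun p : ℝ × ℝ ↦ φ p.1 * kineticKernel i p.1 p.2)
      ((volume.restrict (Ioo (exp (-η)) 1)).prod (volume.restrict (Ioc 0 η))) :=
    hφint.aestronglyMeasurable.comp_fst.mul (measurable_kineticKernel i).aestronglyMeasurable
  refine (integrable_prod_iff hmeas).2 ⟨?_, ?_⟩
  · filter_upwards [ae_restrict_mem measurableSet_Ioo] with E hE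
    exact (integrableOn_kineticKernel hi.le ((exp_pos _).trans hE.1) hE.2.le).const_mul _
  · refine (integrableOn_mul_sq_sub_exp_rpow hφint hi.le).norm.congr ?_
    filter_upwards [ae_restrict_mem measurableSet_Ioo] with E hE
    rw [norm_mul, norm_of_nonneg (rpow_nonneg (sq_sub_exp_nonneg hE.1.le) _),
      ← setIntegral_kineticKernel hi hE.1 hE.2.le, ← integral_const_mul]
    simp only [norm_mul, norm_of_nonneg (kineticKernel_nonneg hi.le)]

lemma intervalIntegrable_exp_mul_gfun (hφint : IntegrableOn φ (Ioo (exp (-η)) 1)) (hi : 0 < i)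
    (hη : 0 ≤ η) :
    IntervalIntegrable (fun θ ↦ i * exp (-2 * θ) * gfun φ (i - 1) θ) volume 0 η := by
  rw [intervalIntegrable_iff_integrableOn_Ioc_of_le hη]
  refine (integrable_mul_kineticKernel hφint hi).integral_prod_right.congr ?_
  filter_upwards [ae_restrict_mem measurableSet_Ioc] with θ hθ
  exact setIntegral_mul_kineticKernel φ i hθ.1.le hθ.2

lemma gfun_eq_integral_gfun_sub_one (hφint : IntegrableOn φ (Ioo (exp (-η)) 1)) (hi : 0 < i)
    (hη : 0 ≤ η) :
    gfun φ i η = ∫ θ in 0..η, i * exp (-2 * θ) * gfun φ (i - 1) θ :=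
  calc gfun φ i η
    _ = ∫ E in Ioo (exp (-η)) 1, φ E * ((E ^ 2 - exp (-2 * η)) / 2) ^ i :=
      gfun_eq_setIntegral_Ioo φ i hη
    _ = ∫ E in Ioo (exp (-η)) 1, ∫ θ in Ioc 0 η, φ E * kineticKernel i E θ :=
      setIntegral_congr_fun measurableSet_Ioo fun E hE ↦ by
        simp only [integral_const_mul, setIntegral_kineticKernel hi hE.1 hE.2.le]
    _ = ∫ θ in Ioc 0 η, ∫ E in Ioo (exp (-η)) 1, φ E * kineticKernel i E θ :=
      integral_integral_swap (integrable_mul_kineticKernel hφint hi)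
    _ = ∫ θ in Ioc 0 η, i * exp (-2 * θ) * gfun φ (i - 1) θ :=
      setIntegral_congr_fun measurableSet_Ioc fun _ hθ ↦
        setIntegral_mul_kineticKernel φ i hθ.1.le hθ.2
    _ = ∫ θ in 0..η, i * exp (-2 * θ) * gfun φ (i - 1) θ :=
      (intervalIntegral.integral_of_le hη).symm

lemma continuousAt_gfun (hφint : ∀ b ∈ Ioo (0 : ℝ) 1, IntegrableOn φ (Ioo b 1)) (hi : 0 < i)
    (hη : 0 < η) : ContinuousAt (gfun φ i) η := by
  have hint (x : ℝ) (hx : 0 < x) : IntegrableOn φ (Ioo (exp (-x)) 1) :=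
    hφint _ ⟨exp_pos _, exp_lt_one_iff.2 (neg_neg_of_pos hx)⟩
  have hprimitive := intervalIntegral.continuousOn_primitive_interval'
    (intervalIntegrable_exp_mul_gfun (hint (η + 1) (by linarith)) hi (by linarith)) left_mem_uIcc
  rw [uIcc_of_le (by linarith)] at hprimitive
  refine (hprimitive.continuousAt (Icc_mem_nhds hη (lt_add_one η))).congr ?_
  filter_upwards [lt_mem_nhds hη] with x hx
  exact (gfun_eq_integral_gfun_sub_one (hint x hx) hi hx.le).symm

lemma hasDerivAt_gfun (hφint : ∀ b ∈ Ioo (0 : ℝ) 1, IntegrableOn φ (Ioo b 1)) (hi : 0 < i)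
    (hη : 0 < η) (hcont : ContinuousAt (gfun φ (i - 1)) η) :
    HasDerivAt (gfun φ i) (i * exp (-2 * η) * gfun φ (i - 1) η) η := by
  have hint (x : ℝ) (hx : 0 < x) : IntegrableOn φ (Ioo (exp (-x)) 1) :=
    hφint _ ⟨exp_pos _, exp_lt_one_iff.2 (neg_neg_of_pos hx)⟩
  have hmeas : StronglyMeasurableAtFilter (fun θ ↦ i * exp (-2 * θ) * gfun φ (i - 1) θ) (𝓝 η) :=
    ⟨Ioc 0 (η + 1), Ioc_mem_nhds hη (lt_add_one η), (intervalIntegrable_exp_mul_gfun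
      (hint (η + 1) (by linarith)) hi (by linarith)).1.aestronglyMeasurable⟩
  have hftc := intervalIntegral.integral_hasDerivAt_right
    (intervalIntegrable_exp_mul_gfun (hint η hη) hi hη.le) hmeas (by fun_prop)
  refine hftc.congr_of_eventuallyEq ?_
  filter_upwards [lt_mem_nhds hη] with x hx
  exact gfun_eq_integral_gfun_sub_one (hint x hx) hi hx.le

end KineticIntegrals

section DifferentialInequalities

variable {f f' : ℝ → ℝ} {a b c L : ℝ}

lemma le_of_hasDerivAt_pos_of_eq (hab : a ≤ b) (hf : ∀ x ∈ Icc a b, HasDerivAt f (f' x) x)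
    (ha : c ≤ f a) (hc : ∀ x ∈ Icc a b, f x = c → 0 < f' x) : c ≤ f b :=
  image_le_of_deriv_right_lt_deriv_boundary' (f := fun _ ↦ c) (f' := fun _ ↦ 0) (B := f)
    continuousOn_const (fun _ _ ↦ hasDerivWithinAt_const _ _ _) ha
    (fun x hx ↦ (hf x hx).continuousAt.continuousWithinAt)
    (fun x hx ↦ (hf x (Ico_subset_Icc_self hx)).hasDerivWithinAt)
    (fun x hx h ↦ hc x (Ico_subset_Icc_self hx) h.symm) ⟨hab, le_rfl⟩

lemma le_of_tendsto_atBot_of_hasDerivAt_pos (hf : ∀ x ≤ b, HasDerivAt f (f' x) x)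
    (hlim : Tendsto f atBot (𝓝 L)) (hpos : ∀ x ≤ b, f x < L → 0 < f' x) : L ≤ f b := by
  by_contra! hb
  obtain ⟨c, hbc, hcL⟩ := exists_between hb
  obtain ⟨a, hca, hab⟩ := ((hlim.eventually (lt_mem_nhds hcL)).and (eventually_le_atBot b)).exists
  have hcb : c ≤ f b := le_of_hasDerivAt_pos_of_eq hab (fun x hx ↦ hf x hx.2) hca.le
    fun x hx hxc ↦ hpos x hx.2 (hxc.trans_lt hcL)
  exact hcb.not_gt hbc

lemma exists_lt_of_const_le_hasDerivAt (hc : 0 < c) (hf : ∀ x ≥ a, HasDerivAt f (f' x) x)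
    (hf' : ∀ x ≥ a, c ≤ f' x) (M : ℝ) : ∃ x ≥ a, M < f x := by
  set b := a + (|M - f a| + 1) / c with hb
  have hab : a ≤ b := by rw [hb]; linarith [show 0 ≤ (|M - f a| + 1) / c by positivity]
  have hgrowth : c * (b - a) ≤ f b - f a :=
    (convex_Ici a).mul_sub_le_image_sub_of_le_deriv
      (fun x hx ↦ (hf x hx).continuousAt.continuousWithinAt)
      (fun x hx ↦ (hf x (interior_subset hx)).differentiableAt.differentiableWithinAt)
      (fun x hx ↦ (hf x (interior_subset hx)).deriv ▸ hf' x (interior_subset hx))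
      a self_mem_Ici b hab hab
  have hstep : c * (b - a) = |M - f a| + 1 := by rw [hb]; field_simp; ring
  exact ⟨b, hab, by linarith [le_abs_self (M - f a)]⟩

lemma not_forall_mul_sq_le_hasDerivAt (hc : 0 < c) (hpos : ∀ x ≥ a, 0 < f x)
    (hf : ∀ x ≥ a, HasDerivAt f (f' x) x) : ¬ ∀ x ≥ a, c * f x ^ 2 ≤ f' x := by
  intro hf'
  obtain ⟨x, hx, hinv⟩ := exists_lt_of_const_le_hasDerivAt (f := fun x ↦ -(f x)⁻¹) hc
    (fun x hx ↦ ((hf x hx).fun_inv (hpos x hx).ne').fun_neg)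
    (fun x hx ↦ by
      rw [← neg_div, neg_neg, le_div_iff₀ (pow_pos (hpos x hx) 2)]
      exact hf' x hx) 0
  linarith [inv_pos.2 (hpos x hx)]

end DifferentialInequalities

section GrowthRates

/-- The rate `u̇/u` of the compactness variable `u = 4πr³ρ/m` in the logarithmic radius `log r`,
with `s = σ'`. -/
noncomputable def uRate (N u v σ s : ℝ) : ℝ := N - u - (1 + σ - s) * v * (1 + σ * u)

/-- The rate `v̇/v` of the variable `v = m/((r - 2m)σ)` in the logarithmic radius `log r`,
with `s = σ'`. -/
noncomputable def vRate (u v σ s : ℝ) : ℝ :=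
  (u - 1) * (1 + 2 * σ * v) + s * v * (1 + σ * u)

/-- The signed distance of `(u, v)` from the line through `(N, 0)` and `(0, 2N)`, which is
invariant for the limiting system `σ = 0`, `s = 1/(2N)`. -/
noncomputable def excess (N u v : ℝ) : ℝ := u + v / 2 - N

/-- The derivative of `excess N u v` in the logarithmic radius. -/
noncomputable def excessDeriv (N u v σ s : ℝ) : ℝ :=
  u * uRate N u v σ s + v * vRate u v σ s / 2

/-- The cofactor of the excess in a lower bound for its derivative. -/
noncomputable def excessCofactor (N k u v σ : ℝ) : ℝ :=
  -u + (1 / (2 * N) + k * σ) * v * (1 + σ * u) + 2 * σ * v * (u - 1)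

variable {N k u v σ s : ℝ}

lemma excessDeriv_eq (hN : N ≠ 0) :
    excessDeriv N u v σ s = excess N u v * excessCofactor N k u v σ +
      σ * v * ((N - u) * (k - 2) + u * (k - N - 1 / 2) + 3 * u * (N - u) +
        σ * u * (k * N - u)) +
      v * (1 + σ * u) * (s - (1 / (2 * N) + k * σ)) * (u + v / 2) := by
  simp only [excessDeriv, uRate, vRate, excess, excessCofactor]
  field_simp
  ring

lemma excess_mul_cofactor_lt_excessDeriv (hu : 0 < u) (hv : 0 < v) (hσ : 0 < σ) (huN : u < N)
    (hk : 2 ≤ k) (hkN : N + 1 / 2 ≤ k) (hs : 1 / (2 * N) + k * σ ≤ s) :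
    excess N u v * excessCofactor N k u v σ < excessDeriv N u v σ s := by
  have hkNu : 0 ≤ k * N - u := by nlinarith
  have hquadratic : 0 < 3 * u * (N - u) := mul_pos (by positivity) (sub_pos.2 huN)
  have hbracket : 0 < (N - u) * (k - 2) + u * (k - N - 1 / 2) + 3 * u * (N - u) +
      σ * u * (k * N - u) := by
    linarith [mul_nonneg (sub_pos.2 huN).le (sub_nonneg.2 hk),
      mul_nonneg hu.le (show 0 ≤ k - N - 1 / 2 by linarith),
      mul_nonneg (mul_pos hσ hu).le hkNu]
  have hgrowth : 0 ≤ v * (1 + σ * u) * (s - (1 / (2 * N) + k * σ)) * (u + v / 2) :=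
    mul_nonneg (mul_nonneg (by positivity) (sub_nonneg.2 hs)) (by positivity)
  rw [excessDeriv_eq (k := k) (hu.trans huN).ne']
  linarith [mul_pos (mul_pos hσ hv) hbracket]

lemma le_excessCofactor (hu : 0 ≤ u) (hv : 0 ≤ v) (hσ : 0 ≤ σ) (hN : 0 ≤ N) (hk : 2 ≤ k) :
    -u + v / (2 * N) ≤ excessCofactor N k u v σ := by
  have hrest : 0 ≤ 2 * (σ * v * u) + σ * v * (k - 2) +
      (1 / (2 * N) + k * σ) * v * (σ * u) := by
    have := sub_nonneg.2 hk
    positivity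
  simp only [excessCofactor]
  linear_combination hrest

lemma le_vRate (hu : 0 ≤ u) (hv : 0 ≤ v) (hσ : 0 ≤ σ) (hN : 0 ≤ N) (hk : 2 ≤ k)
    (hs : 1 / (2 * N) + k * σ ≤ s) : u - 1 + v / (2 * N) ≤ vRate u v σ s := by
  have hcofactor := le_excessCofactor hu hv hσ hN hk
  have hgrowth : (1 / (2 * N) + k * σ) * v * (1 + σ * u) ≤ s * v * (1 + σ * u) := by gcongr
  simp only [excessCofactor] at hcofactor
  simp only [vRate]
  linarith

lemma excess_le (hN : 1 ≤ N) (hvN : v ≤ 2 * N) : excess N u v ≤ u - 1 + v / (2 * N) := by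
  have hgap : 0 ≤ (N - 1) * (2 * N - v) / (2 * N) :=
    div_nonneg (mul_nonneg (by linarith) (by linarith)) (by linarith)
  have hid : (N - 1) * (2 * N - v) / (2 * N) = u - 1 + v / (2 * N) - excess N u v := by
    simp only [excess]
    field_simp
    ring
  linarith

lemma vRate_pos (hu : 0 < u) (hv : 0 < v) (hσ : 0 < σ) (hN : 1 < N) (hk : 2 ≤ k)
    (hs : 1 / (2 * N) + k * σ ≤ s) (hexcess : 0 < excess N u v) : 0 < vRate u v σ s := by
  refine lt_of_lt_of_le ?_ (le_vRate hu.le hv.le hσ.le (by linarith) hk hs)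
  rcases le_or_gt v (2 * N) with hvN | hvN
  · exact hexcess.trans_le (excess_le hN.le hvN)
  · linarith [(one_lt_div (by linarith)).2 hvN]

/-- The weight `N/(N - 1)` is the smallest one for which `vRate` absorbs the term `-u` of
`excessCofactor` on the line `excess = 0`. -/
lemma excessDeriv_div_add_mul_vRate_pos (hu : 0 < u) (hv : 0 < v) (hσ : 0 < σ) (hN : 1 < N)
    (huN : u < N) (hk : 2 ≤ k) (hkN : N + 1 / 2 ≤ k) (hs : 1 / (2 * N) + k * σ ≤ s)
    (hexcess : 0 < excess N u v) :
    0 < excessDeriv N u v σ s / excess N u v + N / (N - 1) * vRate u v σ s := by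
  have hN1 : 0 < N - 1 := sub_pos.2 hN
  have hcofactor : excessCofactor N k u v σ < excessDeriv N u v σ s / excess N u v := by
    rw [lt_div_iff₀' hexcess]
    exact excess_mul_cofactor_lt_excessDeriv hu hv hσ huN hk hkN hs
  have habsorb : u ≤ N / (N - 1) * vRate u v σ s :=
    calc u
      _ ≤ u + excess N u v / (N - 1) := by linarith [div_pos hexcess hN1]
      _ = N / (N - 1) * (u - 1 + v / (2 * N)) := by
        simp only [excess]
        field_simp
        ring
      _ ≤ N / (N - 1) * vRate u v σ s := by
        gcongr
        exact le_vRate hu.le hv.le hσ.le (by linarith) hk hs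
  have : 0 < v / (2 * N) := by positivity
  linarith [le_excessCofactor hu.le hv.le hσ.le (by linarith : 0 ≤ N) hk]

end GrowthRates

/-- A global orbit, in the logarithmic radius `t = log r`, of the system satisfied by
`u = 4πr³ρ/m` and `v = m/((r - 2m)σ)`, where `s = σ'` obeys the growth condition
`s ≥ 1/(2N) + kσ`. The functions `σ` and `s` of `t` are otherwise arbitrary. -/
structure IsLogOrbit (N k : ℝ) (u v σ s : ℝ → ℝ) : Prop where
  u_pos : ∀ t, 0 < u t
  v_pos : ∀ t, 0 < v t
  σ_pos : ∀ t, 0 < σ t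
  le_s : ∀ t, 1 / (2 * N) + k * σ t ≤ s t
  hasDerivAt_u : ∀ t, HasDerivAt u (u t * uRate N (u t) (v t) (σ t) (s t)) t
  hasDerivAt_v : ∀ t, HasDerivAt v (v t * vRate (u t) (v t) (σ t) (s t)) t

namespace IsLogOrbit

variable {N k σc : ℝ} {u v σ s : ℝ → ℝ}

lemma hasDerivAt_excess (h : IsLogOrbit N k u v σ s) (t : ℝ) :
    HasDerivAt (fun t ↦ excess N (u t) (v t)) (excessDeriv N (u t) (v t) (σ t) (s t)) t :=
  ((h.hasDerivAt_u t).add ((h.hasDerivAt_v t).div_const 2)).sub_const N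

lemma excess_mul_cofactor_lt (h : IsLogOrbit N k u v σ s) (hk : 2 ≤ k) (hkN : N + 1 / 2 ≤ k)
    {t : ℝ} (ht : excess N (u t) (v t) ≤ 0) :
    excess N (u t) (v t) * excessCofactor N k (u t) (v t) (σ t) <
      excessDeriv N (u t) (v t) (σ t) (s t) := by
  refine excess_mul_cofactor_lt_excessDeriv (h.u_pos t) (h.v_pos t) (h.σ_pos t) ?_ hk hkN (h.le_s t)
  rw [excess] at ht
  linarith [h.v_pos t]

lemma excess_nonneg (h : IsLogOrbit N k u v σ s) (hN : 0 < N) (hk : 2 ≤ k) (hkN : N + 1 / 2 ≤ k)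
    (hu : Tendsto u atBot (𝓝 N)) (hv : Tendsto v atBot (𝓝 0)) (hσ : Tendsto σ atBot (𝓝 σc))
    (t : ℝ) : 0 ≤ excess N (u t) (v t) := by
  have hexcess : Tendsto (fun t ↦ excess N (u t) (v t)) atBot (𝓝 0) := by
    simpa [excess] using (hu.add (hv.div_const 2)).sub_const N
  have hcofactor :
      Tendsto (fun t ↦ excessCofactor N k (u t) (v t) (σ t)) atBot (𝓝 (-N)) := by
    simpa [excessCofactor] using (hu.neg.add ((((hσ.const_mul k).const_add (1 / (2 * N))).mul
      hv).mul ((hσ.mul hu).const_add 1))).add (((hσ.const_mul 2).mul hv).mul (hu.sub_const 1))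
  obtain ⟨T, hT⟩ := eventually_atBot.1 (hcofactor.eventually (gt_mem_nhds (neg_neg_of_pos hN)))
  have hcentre : ∀ t ≤ T, 0 ≤ excess N (u t) (v t) := fun t ht ↦
    le_of_tendsto_atBot_of_hasDerivAt_pos (f := fun t ↦ excess N (u t) (v t))
      (fun x _ ↦ h.hasDerivAt_excess x) hexcess
      fun x hx hneg ↦ (mul_pos_of_neg_of_neg hneg (hT x (hx.trans ht))).trans
        (h.excess_mul_cofactor_lt hk hkN hneg.le)
  rcases le_total t T with ht | ht
  · exact hcentre t ht
  · refine le_of_hasDerivAt_pos_of_eq (f := fun t ↦ excess N (u t) (v t)) ht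
      (fun x _ ↦ h.hasDerivAt_excess x) (hcentre T le_rfl) fun x _ hzero ↦ ?_
    simpa [hzero] using h.excess_mul_cofactor_lt hk hkN hzero.le

lemma excess_pos (h : IsLogOrbit N k u v σ s) (hN : 0 < N) (hk : 2 ≤ k) (hkN : N + 1 / 2 ≤ k)
    (hu : Tendsto u atBot (𝓝 N)) (hv : Tendsto v atBot (𝓝 0)) (hσ : Tendsto σ atBot (𝓝 σc))
    (t : ℝ) : 0 < excess N (u t) (v t) := by
  have hnonneg := h.excess_nonneg hN hk hkN hu hv hσ
  refine (hnonneg t).lt_of_ne' fun hzero ↦ ?_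
  have hmin : IsLocalMin (fun t ↦ excess N (u t) (v t)) t :=
    Eventually.of_forall fun x ↦ hzero.trans_le (hnonneg x)
  have hderiv := h.excess_mul_cofactor_lt hk hkN hzero.le
  rw [hmin.hasDerivAt_eq_zero (h.hasDerivAt_excess t), hzero, zero_mul] at hderiv
  exact hderiv.false

lemma strictMono_v (h : IsLogOrbit N k u v σ s) (hN : 1 < N) (hk : 2 ≤ k)
    (hexcess : ∀ t, 0 < excess N (u t) (v t)) : StrictMono v :=
  strictMono_of_hasDerivAt_pos h.hasDerivAt_v fun t ↦ mul_pos (h.v_pos t)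
    (vRate_pos (h.u_pos t) (h.v_pos t) (h.σ_pos t) hN hk (h.le_s t) (hexcess t))

/-- The Lyapunov function `excess · v^{N/(N-1)}`, in logarithmic form, increases where `u < N`,
while `u ≥ N` bounds the excess from below by `v / 2`. -/
lemma exists_pos_le_excess (h : IsLogOrbit N k u v σ s) (hN : 1 < N) (hk : 2 ≤ k)
    (hkN : N + 1 / 2 ≤ k) (hexcess : ∀ t, 0 < excess N (u t) (v t)) {M : ℝ}
    (hvM : ∀ t, v t ≤ M) : ∃ d > 0, ∀ t ≥ 0, d ≤ excess N (u t) (v t) := by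
  set a := N / (N - 1)
  have : 0 ≤ a := div_nonneg (by linarith) (by linarith)
  set X : ℝ → ℝ := fun t ↦ log (excess N (u t) (v t)) + a * log (v t) with hX
  have hXderiv (t : ℝ) : HasDerivAt X (excessDeriv N (u t) (v t) (σ t) (s t) /
      excess N (u t) (v t) + a * vRate (u t) (v t) (σ t) (s t)) t := by
    refine (((h.hasDerivAt_excess t).log (hexcess t).ne').add
      (((h.hasDerivAt_v t).log (h.v_pos t).ne').const_mul a)).congr_deriv ?_
    rw [mul_div_cancel_left₀ _ (h.v_pos t).ne']
  obtain ⟨c, hc⟩ := exists_lt (min (X 0) (log (v 0 / 2) + a * log (v 0)))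
  obtain ⟨hcX, hcv⟩ := lt_min_iff.1 hc
  have hcX' (t : ℝ) (ht : 0 ≤ t) : c ≤ X t := by
    refine le_of_hasDerivAt_pos_of_eq ht (fun x _ ↦ hXderiv x) hcX.le fun x hx hxc ↦ ?_
    refine excessDeriv_div_add_mul_vRate_pos (h.u_pos x) (h.v_pos x) (h.σ_pos x) hN ?_ hk hkN
      (h.le_s x) (hexcess x)
    by_contra! huN
    have hv0 := h.v_pos 0
    have hvx : v 0 ≤ v x := (h.strictMono_v hN hk hexcess).monotone hx.1
    have hhalf : v 0 / 2 ≤ excess N (u x) (v x) := by rw [excess]; linarith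
    have : log (v 0 / 2) + a * log (v 0) ≤ X x := by simp only [hX]; gcongr
    linarith
  refine ⟨exp (c - a * log M), exp_pos _, fun t ht ↦ ?_⟩
  rw [← le_log_iff_exp_le (hexcess t), sub_le_iff_le_add]
  refine (hcX' t ht).trans ?_
  have hv := h.v_pos t
  simp only [hX]
  gcongr
  exact hvM t

lemma exists_two_mul_lt_v (h : IsLogOrbit N k u v σ s) (hN : 1 < N) (hk : 2 ≤ k)
    (hkN : N + 1 / 2 ≤ k) (hexcess : ∀ t, 0 < excess N (u t) (v t)) : ∃ t, 2 * N < v t := by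
  by_contra! hvN
  obtain ⟨d, hd, hdle⟩ := h.exists_pos_le_excess hN hk hkN hexcess hvN
  have hrate (t : ℝ) (ht : t ≥ 0) : v 0 * d ≤ v t * vRate (u t) (v t) (σ t) (s t) := by
    refine mul_le_mul ((h.strictMono_v hN hk hexcess).monotone ht) ?_ hd.le (h.v_pos t).le
    exact ((hdle t ht).trans (excess_le hN.le (hvN t))).trans
      (le_vRate (h.u_pos t).le (h.v_pos t).le (h.σ_pos t).le (by linarith) hk (h.le_s t))
  obtain ⟨t, -, ht⟩ := exists_lt_of_const_le_hasDerivAt (mul_pos (h.v_pos 0) hd)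
    (fun t _ ↦ h.hasDerivAt_v t) hrate (2 * N)
  exact (hvN t).not_gt ht

lemma v_le_two_mul (h : IsLogOrbit N k u v σ s) (hN : 1 < N) (hk : 2 ≤ k)
    (hexcess : ∀ t, 0 < excess N (u t) (v t)) (t₀ : ℝ) : v t₀ ≤ 2 * N := by
  by_contra! hv₀
  have hc : 0 < 1 / (2 * N) - 1 / v t₀ :=
    sub_pos.2 (one_div_lt_one_div_of_lt (by linarith) hv₀)
  refine not_forall_mul_sq_le_hasDerivAt hc (fun t _ ↦ h.v_pos t) (fun t _ ↦ h.hasDerivAt_v t)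
    (a := t₀) fun t ht ↦ ?_
  have hv := h.v_pos t
  have hone : 1 ≤ v t / v t₀ :=
    (one_le_div (h.v_pos t₀)).2 ((h.strictMono_v hN hk hexcess).monotone ht)
  have hlinear : (1 / (2 * N) - 1 / v t₀) * v t ≤ vRate (u t) (v t) (σ t) (s t) :=
    calc (1 / (2 * N) - 1 / v t₀) * v t
      _ = v t / (2 * N) - v t / v t₀ := by ring
      _ ≤ u t - 1 + v t / (2 * N) := by linarith [h.u_pos t]
      _ ≤ vRate (u t) (v t) (σ t) (s t) :=
        le_vRate (h.u_pos t).le hv.le (h.σ_pos t).le (by linarith) hk (h.le_s t)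
  calc (1 / (2 * N) - 1 / v t₀) * v t ^ 2
    _ = v t * ((1 / (2 * N) - 1 / v t₀) * v t) := by ring
    _ ≤ v t * vRate (u t) (v t) (σ t) (s t) := by gcongr

theorem not_tendsto_centre (h : IsLogOrbit N k u v σ s) (hN : 1 < N) (hk : 2 ≤ k)
    (hkN : N + 1 / 2 ≤ k) (hσ : Tendsto σ atBot (𝓝 σc)) :
    ¬ (Tendsto u atBot (𝓝 N) ∧ Tendsto v atBot (𝓝 0)) := by
  rintro ⟨hu, hv⟩
  have hexcess := h.excess_pos (by linarith) hk hkN hu hv hσ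
  obtain ⟨t, ht⟩ := h.exists_two_mul_lt_v hN hk hkN hexcess
  exact (h.v_le_two_mul hN hk hexcess t).not_gt ht

end IsLogOrbit

section LogarithmicDerivative

variable {f g : ℝ → ℝ} {a b x : ℝ}

lemma hasDerivAt_mul_of_rate (hf : HasDerivAt f (f x * a) x) (hg : HasDerivAt g (g x * b) x) :
    HasDerivAt (fun x ↦ f x * g x) (f x * g x * (a + b)) x :=
  (hf.mul hg).congr_deriv (by ring)

lemma hasDerivAt_div_of_rate (hf : HasDerivAt f (f x * a) x) (hg : HasDerivAt g (g x * b) x)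
    (hgx : g x ≠ 0) : HasDerivAt (fun x ↦ f x / g x) (f x / g x * (a - b)) x :=
  (hf.div hg hgx).congr_deriv (by field_simp)

end LogarithmicDerivative

section EquationOfState

variable {φ : ℝ → ℝ} {l r η t y' s : ℝ} {y : ℝ → ℝ}

lemma sigmaFun_nonneg (hφ : ∀ x ∈ Ioo (0 : ℝ) 1, 0 ≤ φ x) (hl : -(3 / 2) < l) (hη : 0 ≤ η) :
    0 ≤ sigmaFun φ l η := by
  have hN : 0 < 3 + 2 * l := by linarith
  have hg := gfun_nonneg hφ (l + 3 / 2) hη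
  have hg' := gfun_nonneg hφ (l + 1 / 2) hη
  rw [sigmaFun]
  positivity

lemma sigmaFun_pos_of_deriv_pos (hφ : ∀ x ∈ Ioo (0 : ℝ) 1, 0 ≤ φ x) (hl : -(3 / 2) < l)
    (hη : 0 < η) (hderiv : ∀ x ∈ Ioc 0 η, 0 < deriv (sigmaFun φ l) x) :
    0 < sigmaFun φ l η := by
  have hmono : StrictMonoOn (sigmaFun φ l) (Ioc 0 η) :=
    strictMonoOn_of_deriv_pos (convex_Ioc 0 η)
      (fun x hx ↦ (differentiableAt_of_deriv_ne_zero
        (hderiv x hx).ne').continuousAt.continuousWithinAt)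
      fun x hx ↦ hderiv x (interior_subset hx)
  exact (sigmaFun_nonneg hφ hl (half_pos hη).le).trans_lt
    (hmono ⟨half_pos hη, half_le_self hη.le⟩ ⟨hη, le_rfl⟩ (half_lt_self hη))

lemma gfun_ne_zero_of_sigmaFun_ne_zero (hσ : sigmaFun φ l η ≠ 0) : gfun φ (l + 3 / 2) η ≠ 0 :=
  fun hg ↦ hσ (by simp [sigmaFun, hg])

lemma exp_mul_gfun_eq (hσ : sigmaFun φ l η ≠ 0) :
    (l + 3 / 2) * exp (-2 * η) * gfun φ (l + 1 / 2) η =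
      gfun φ (l + 3 / 2) η * (1 / sigmaFun φ l η - (3 + 2 * l)) := by
  have hg := gfun_ne_zero_of_sigmaFun_ne_zero hσ
  have hN : 3 + 2 * l ≠ 0 := fun hN ↦ hσ (by simp [sigmaFun, hN])
  have hinv : gfun φ (l + 3 / 2) η * (1 / sigmaFun φ l η) = (3 + 2 * l) *
      (gfun φ (l + 3 / 2) η + 1 / 2 * exp (-2 * η) * gfun φ (l + 1 / 2) η) := by
    rw [sigmaFun, one_div_div, ← mul_div_assoc,
      div_eq_iff (mul_ne_zero (one_div_ne_zero hN) hg), mul_mul_mul_comm, mul_one_div_cancel hN,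
      one_mul, mul_comm]
  rw [mul_sub, hinv]
  ring

lemma rhoFun_eq_pRad_div_sigmaFun (r : ℝ) (hσ : sigmaFun φ l η ≠ 0) :
    rhoFun φ l r η = pRad φ l r η / sigmaFun φ l η := by
  rw [rhoFun, pRad]
  linear_combination acoef l * r ^ (2 * l) * exp ((2 * l + 4) * η) * exp_mul_gfun_eq hσ

lemma acoef_pos (hl : -1 < l) : 0 < acoef l := by
  have hl' : 0 < l + 3 / 2 := by linarith
  have : 0 < Gamma (l + 1) := Gamma_pos_of_pos (by linarith)
  have : 0 < Gamma (l + 3 / 2) := Gamma_pos_of_pos hl'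
  rw [acoef]
  positivity

lemma pRad_nonneg (hφ : ∀ x ∈ Ioo (0 : ℝ) 1, 0 ≤ φ x) (hl : -1 < l) (hr : 0 ≤ r) (hη : 0 ≤ η) :
    0 ≤ pRad φ l r η := by
  have ha := acoef_pos hl
  have hg := gfun_nonneg hφ (l + 3 / 2) hη
  rw [pRad]
  positivity

lemma rhoFun_pos (hφ : ∀ x ∈ Ioo (0 : ℝ) 1, 0 ≤ φ x) (hl : -1 < l) (hr : 0 < r) (hη : 0 ≤ η)
    (hσ : 0 < sigmaFun φ l η) : 0 < rhoFun φ l r η := by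
  have ha := acoef_pos hl
  have hg : 0 < gfun φ (l + 3 / 2) η :=
    (gfun_nonneg hφ _ hη).lt_of_ne' (gfun_ne_zero_of_sigmaFun_ne_zero hσ.ne')
  rw [rhoFun_eq_pRad_div_sigmaFun r hσ.ne', pRad]
  positivity

lemma hasDerivAt_gfun_of_sigmaFun (hφint : ∀ b ∈ Ioo (0 : ℝ) 1, IntegrableOn φ (Ioo b 1))
    (hl : -(3 / 2) < l) (hη : 0 < η) (hcont : ContinuousAt (sigmaFun φ l) η)
    (hσ : sigmaFun φ l η ≠ 0) :
    HasDerivAt (gfun φ (l + 3 / 2))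
      (gfun φ (l + 3 / 2) η * (1 / sigmaFun φ l η - (3 + 2 * l))) η := by
  have hl' : 0 < l + 3 / 2 := by linarith
  have hindex : l + 3 / 2 - 1 = l + 1 / 2 := by ring
  have hcont' : ContinuousAt (gfun φ (l + 1 / 2)) η := by
    have hquot : ContinuousAt (fun x ↦ gfun φ (l + 3 / 2) x *
        (1 / sigmaFun φ l x - (3 + 2 * l)) / ((l + 3 / 2) * exp (-2 * x))) η :=
      ((continuousAt_gfun hφint hl' hη).mul ((continuousAt_const.div hcont hσ).sub
        continuousAt_const)).div (by fun_prop) (by positivity)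
    refine hquot.congr ?_
    filter_upwards [hcont.eventually_ne hσ] with x hx
    rw [← exp_mul_gfun_eq hx, mul_div_cancel_left₀ _ (by positivity)]
  have hderiv := hasDerivAt_gfun hφint hl' hη (hindex ▸ hcont')
  rwa [hindex, exp_mul_gfun_eq hσ] at hderiv

lemma hasDerivAt_pRad_exp (hφint : ∀ b ∈ Ioo (0 : ℝ) 1, IntegrableOn φ (Ioo b 1))
    (hl : -(3 / 2) < l) (hy : HasDerivAt y y' t) (hyt : 0 < y t)
    (hcont : ContinuousAt (sigmaFun φ l) (y t)) (hσ : sigmaFun φ l (y t) ≠ 0) :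
    HasDerivAt (fun t ↦ pRad φ l (exp t) (y t))
      (pRad φ l (exp t) (y t) * (2 * l + (1 + 1 / sigmaFun φ l (y t)) * y')) t := by
  have hr : HasDerivAt (fun t ↦ exp t ^ (2 * l)) (exp t ^ (2 * l) * (2 * l)) t := by
    simp only [← exp_mul]
    exact ((hasDerivAt_id t).mul_const (2 * l)).exp.congr_deriv (by simp)
  have hexp := (hy.const_mul (2 * l + 4)).exp
  have hg := (hasDerivAt_gfun_of_sigmaFun hφint hl hyt hcont hσ).comp t hy
  refine (((hr.const_mul (acoef l)).mul hexp).mul hg).congr_deriv ?_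
  simp only [pRad, Pi.mul_apply, Function.comp_apply]
  ring

lemma hasDerivAt_rhoFun_exp (hφint : ∀ b ∈ Ioo (0 : ℝ) 1, IntegrableOn φ (Ioo b 1))
    (hl : -(3 / 2) < l) (hy : HasDerivAt y y' t) (hyt : 0 < y t)
    (hσ' : HasDerivAt (sigmaFun φ l) s (y t)) (hσ : sigmaFun φ l (y t) ≠ 0) :
    HasDerivAt (fun t ↦ rhoFun φ l (exp t) (y t))
      (rhoFun φ l (exp t) (y t) * (2 * l + (1 + (1 - s) / sigmaFun φ l (y t)) * y')) t := by
  have hσy : HasDerivAt (fun t ↦ sigmaFun φ l (y t))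
      (sigmaFun φ l (y t) * (s * y' / sigmaFun φ l (y t))) t :=
    (hσ'.comp t hy).congr_deriv (mul_div_cancel₀ _ hσ).symm
  have hquot := hasDerivAt_div_of_rate
    (hasDerivAt_pRad_exp hφint hl hy hyt hσ'.continuousAt hσ) hσy hσ
  refine (hquot.congr_of_eventuallyEq ?_).congr_deriv ?_
  · filter_upwards [hσy.continuousAt.eventually_ne hσ] with x hx
    exact rhoFun_eq_pRad_div_sigmaFun _ hx
  · rw [rhoFun_eq_pRad_div_sigmaFun _ hσ]
    ring

end EquationOfState

/-- The compactness variable `u = 4πr³ρ/m` as a function of `t = log r`. -/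
noncomputable def logU (φ : ℝ → ℝ) (l : ℝ) (m ηf : ℝ → ℝ) (t : ℝ) : ℝ :=
  4 * π * exp t ^ 3 * rhoFun φ l (exp t) (ηf (exp t)) / m (exp t)

/-- The variable `v = m/((r - 2m)σ)` as a function of `t = log r`. -/
noncomputable def logV (φ : ℝ → ℝ) (l : ℝ) (m ηf : ℝ → ℝ) (t : ℝ) : ℝ :=
  m (exp t) / ((exp t - 2 * m (exp t)) * sigmaFun φ l (ηf (exp t)))

namespace IsEVSolution

variable {φ m ηf : ℝ → ℝ} {l r₁ r t k ηc s : ℝ} {R : EReal}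

lemma hasDerivAt_m_exp (h : IsEVSolution φ l m ηf r₁ R) (ht : r₁ < exp t) (htR : exp t < R) :
    HasDerivAt (fun t ↦ m (exp t)) (m (exp t) * logU φ l m ηf t) t := by
  obtain ⟨-, hm, -, hm', -⟩ := h (exp t) ht htR
  refine (hm'.comp t (hasDerivAt_exp t)).congr_deriv ?_
  rw [logU]
  field_simp

lemma hasDerivAt_eta_exp (h : IsEVSolution φ l m ηf r₁ R) (ht : r₁ < exp t) (htR : exp t < R)
    (hσ : sigmaFun φ l (ηf (exp t)) ≠ 0) :
    HasDerivAt (fun t ↦ ηf (exp t)) (-(sigmaFun φ l (ηf (exp t)) * logV φ l m ηf t *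
      (1 + sigmaFun φ l (ηf (exp t)) * logU φ l m ηf t))) t := by
  obtain ⟨-, hm, hmr, -, hη'⟩ := h (exp t) ht htR
  have hgap : exp t - 2 * m (exp t) ≠ 0 := (sub_pos.2 hmr).ne'
  have hgap' : (1 - 2 * m (exp t) / exp t)⁻¹ = exp t / (exp t - 2 * m (exp t)) := by
    rw [one_sub_div (exp_pos t).ne', inv_div]
  refine (hη'.comp t (hasDerivAt_exp t)).congr_deriv ?_
  rw [hgap', logU, logV, rhoFun_eq_pRad_div_sigmaFun _ hσ]
  field_simp

lemma hasDerivAt_logU (h : IsEVSolution φ l m ηf r₁ R) (hl : -(3 / 2) < l)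
    (hφint : ∀ b ∈ Ioo (0 : ℝ) 1, IntegrableOn φ (Ioo b 1)) (ht : r₁ < exp t) (htR : exp t < R)
    (hσ' : HasDerivAt (sigmaFun φ l) s (ηf (exp t))) (hσ : sigmaFun φ l (ηf (exp t)) ≠ 0) :
    HasDerivAt (logU φ l m ηf) (logU φ l m ηf t * uRate (3 + 2 * l) (logU φ l m ηf t)
      (logV φ l m ηf t) (sigmaFun φ l (ηf (exp t))) s) t := by
  obtain ⟨hη, hm, -⟩ := h (exp t) ht htR
  have hr : HasDerivAt (fun t ↦ 4 * π * exp t ^ 3) (4 * π * exp t ^ 3 * 3) t :=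
    (((hasDerivAt_exp t).fun_pow 3).const_mul (4 * π)).congr_deriv (by push_cast; ring)
  have hρ := hasDerivAt_rhoFun_exp hφint hl (h.hasDerivAt_eta_exp ht htR hσ) hη hσ' hσ
  refine (hasDerivAt_div_of_rate (hasDerivAt_mul_of_rate hr hρ)
    (h.hasDerivAt_m_exp ht htR) hm.ne').congr_deriv ?_
  rw [← logU, uRate]
  field_simp
  ring

lemma hasDerivAt_logV (h : IsEVSolution φ l m ηf r₁ R) (ht : r₁ < exp t) (htR : exp t < R)
    (hσ' : HasDerivAt (sigmaFun φ l) s (ηf (exp t))) (hσ : sigmaFun φ l (ηf (exp t)) ≠ 0) :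
    HasDerivAt (logV φ l m ηf) (logV φ l m ηf t * vRate (logU φ l m ηf t)
      (logV φ l m ηf t) (sigmaFun φ l (ηf (exp t))) s) t := by
  obtain ⟨-, hm, hmr, -⟩ := h (exp t) ht htR
  have hgap : exp t - 2 * m (exp t) ≠ 0 := (sub_pos.2 hmr).ne'
  have hm' := h.hasDerivAt_m_exp ht htR
  have hgap' : HasDerivAt (fun t ↦ exp t - 2 * m (exp t)) ((exp t - 2 * m (exp t)) *
      ((exp t - 2 * (m (exp t) * logU φ l m ηf t)) / (exp t - 2 * m (exp t)))) t :=
    ((hasDerivAt_exp t).sub (hm'.const_mul 2)).congr_deriv (mul_div_cancel₀ _ hgap).symm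
  have hσt : HasDerivAt (fun t ↦ sigmaFun φ l (ηf (exp t))) (sigmaFun φ l (ηf (exp t)) *
      -(s * logV φ l m ηf t * (1 + sigmaFun φ l (ηf (exp t)) * logU φ l m ηf t))) t := by
    refine (hσ'.comp t (h.hasDerivAt_eta_exp ht htR hσ)).congr_deriv ?_
    ring
  have hv : sigmaFun φ l (ηf (exp t)) * logV φ l m ηf t =
      m (exp t) / (exp t - 2 * m (exp t)) := by
    rw [logV]
    field_simp
  refine (hasDerivAt_div_of_rate hm' (hasDerivAt_mul_of_rate hgap' hσt)
    (mul_ne_zero hgap hσ)).congr_deriv ?_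
  rw [← logV, vRate, mul_assoc 2, hv]
  field_simp
  ring

lemma antitoneOn_eta (h : IsEVSolution φ l m ηf r₁ R) (hl : -1 < l)
    (hφ : ∀ x ∈ Ioo (0 : ℝ) 1, 0 ≤ φ x) (hr₁ : 0 ≤ r₁) (hrR : r < R) :
    AntitoneOn ηf (Ioc r₁ r) := by
  have hsub (x : ℝ) (hx : x ∈ Ioc r₁ r) := h x hx.1 ((EReal.coe_le_coe hx.2).trans_lt hrR)
  refine antitoneOn_of_hasDerivWithinAt_nonpos (convex_Ioc r₁ r)
    (fun x hx ↦ (hsub x hx).2.2.2.2.continuousAt.continuousWithinAt)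
    (fun x hx ↦ (hsub x (interior_subset hx)).2.2.2.2.hasDerivWithinAt) fun x hx ↦ ?_
  obtain ⟨hη, hm, hmx, -⟩ := hsub x (interior_subset hx)
  have hx₀ : 0 < x := hr₁.trans_lt (interior_subset hx).1
  have hgap : 0 < 1 - 2 * m x / x := sub_pos.2 ((div_lt_one hx₀).2 hmx)
  have hp := pRad_nonneg hφ hl hx₀.le hη.le
  rw [neg_div, neg_nonpos]
  positivity

lemma eta_le_of_tendsto (h : IsEVSolution φ l m ηf 0 R) (hl : -1 < l)
    (hφ : ∀ x ∈ Ioo (0 : ℝ) 1, 0 ≤ φ x) (hηc : Tendsto ηf (𝓝[>] 0) (𝓝 ηc)) (hr : 0 < r)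
    (hrR : r < R) : ηf r ≤ ηc := by
  refine ge_of_tendsto hηc ?_
  filter_upwards [Ioc_mem_nhdsGT hr] with x hx
  exact h.antitoneOn_eta hl hφ le_rfl hrR hx ⟨hr, le_rfl⟩ hx.2

lemma m_le_toReal (h : IsEVSolution φ l m ηf r₁ R) (hR : R ≠ ⊤) (hr : r₁ < r)
    (hrR : r < R) : m r ≤ R.toReal := by
  obtain ⟨-, hm, hmr, -⟩ := h r hr hrR
  have : r ≤ R.toReal := EReal.coe_le_coe_iff.1 (hrR.le.trans (EReal.le_coe_toReal hR))
  linarith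

lemma isLogOrbit (h : IsEVSolution φ l m ηf 0 ⊤) (hl : -1 < l)
    (hφ : ∀ x ∈ Ioo (0 : ℝ) 1, 0 ≤ φ x)
    (hφint : ∀ b ∈ Ioo (0 : ℝ) 1, IntegrableOn φ (Ioo b 1))
    (hσ : ∀ r > 0, 0 < sigmaFun φ l (ηf r))
    (hσ' : ∀ r > 0, DifferentiableAt ℝ (sigmaFun φ l) (ηf r))
    (hgrowth : ∀ r > 0, 1 / (2 * (3 + 2 * l)) + k * sigmaFun φ l (ηf r) ≤
      deriv (sigmaFun φ l) (ηf r)) :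
    IsLogOrbit (3 + 2 * l) k (logU φ l m ηf) (logV φ l m ηf)
      (fun t ↦ sigmaFun φ l (ηf (exp t))) (fun t ↦ deriv (sigmaFun φ l) (ηf (exp t))) where
  u_pos t := by
    obtain ⟨hη, hm, -⟩ := h (exp t) (exp_pos t) (EReal.coe_lt_top _)
    have hρ := rhoFun_pos hφ hl (exp_pos t) hη.le (hσ _ (exp_pos t))
    rw [logU]
    positivity
  v_pos t := by
    obtain ⟨-, hm, hmr, -⟩ := h (exp t) (exp_pos t) (EReal.coe_lt_top _)
    exact div_pos hm (mul_pos (sub_pos.2 hmr) (hσ _ (exp_pos t)))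
  σ_pos t := hσ _ (exp_pos t)
  le_s t := hgrowth _ (exp_pos t)
  hasDerivAt_u t := h.hasDerivAt_logU (by linarith) hφint (exp_pos t) (EReal.coe_lt_top _)
    (hσ' _ (exp_pos t)).hasDerivAt (hσ _ (exp_pos t)).ne'
  hasDerivAt_v t := h.hasDerivAt_logV (exp_pos t) (EReal.coe_lt_top _)
    (hσ' _ (exp_pos t)).hasDerivAt (hσ _ (exp_pos t)).ne'

end IsEVSolution

lemma tendsto_logV_atBot {φ m ηf : ℝ → ℝ} {l c : ℝ}
    (hm : Tendsto (fun r ↦ m r / r) (𝓝[>] 0) (𝓝 0))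
    (hσ : Tendsto (fun r ↦ sigmaFun φ l (ηf r)) (𝓝[>] 0) (𝓝 c)) (hc : c ≠ 0) :
    Tendsto (logV φ l m ηf) atBot (𝓝 0) := by
  have hquot : Tendsto (fun r ↦ m r / r / ((1 - 2 * (m r / r)) * sigmaFun φ l (ηf r)))
      (𝓝[>] 0) (𝓝 0) := by
    simpa [Pi.div_def] using hm.div (((hm.const_mul 2).const_sub 1).mul hσ) (by simpa using hc)
  refine (hquot.comp tendsto_exp_atBot_nhdsGT).congr fun t ↦ ?_
  have ht := (exp_pos t).ne'
  simp only [Function.comp_apply, logV]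
  rw [div_div, ← mul_assoc, mul_sub, mul_one, mul_left_comm, mul_div_cancel₀ _ ht]

theorem stmt1_general {l k ηch ηc : ℝ} {φ m ηf : ℝ → ℝ} {R : EReal} (hl : -1 < l)
    (hφ : ∀ x ∈ Ioo (0 : ℝ) 1, 0 ≤ φ x)
    (hφint : ∀ b ∈ Ioo (0 : ℝ) 1, IntegrableOn φ (Ioo b 1))
    (hk : 2 ≤ k) (hkl : 3 + 2 * l + 1 / 2 ≤ k)
    (hgrowth : ∀ η ∈ Ioc 0 ηch,
      1 / (2 * (3 + 2 * l)) + k * sigmaFun φ l η ≤ deriv (sigmaFun φ l) η)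
    (hsol : IsEVSolution φ l m ηf 0 R)
    (hηc : Tendsto ηf (𝓝[>] 0) (𝓝 ηc)) (hm : Tendsto (fun r ↦ m r / r) (𝓝[>] 0) (𝓝 0))
    (hu : Tendsto (fun r ↦ 4 * π * r ^ 3 * rhoFun φ l r (ηf r) / m r) (𝓝[>] 0) (𝓝 (3 + 2 * l)))
    (hηch : ηc < ηch) :
    R < ⊤ ∧ ∃ M : ℝ, ∀ r : ℝ, 0 < r → (r : EReal) < R → m r ≤ M := by
  suffices hR : R ≠ ⊤ from ⟨hR.lt_top, R.toReal, fun r hr hrR ↦ hsol.m_le_toReal hR hr hrR⟩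
  rintro rfl
  have hmem (r : ℝ) (hr : 0 < r) : 0 < ηf r ∧ ηf r ≤ ηc :=
    ⟨(hsol r hr (EReal.coe_lt_top r)).1, hsol.eta_le_of_tendsto hl hφ hηc hr (EReal.coe_lt_top r)⟩
  have hηc₀ : 0 < ηc := (hmem 1 one_pos).1.trans_le (hmem 1 one_pos).2
  have hderiv (η : ℝ) (hη : η ∈ Ioc 0 ηch) : 0 < deriv (sigmaFun φ l) η := by
    have hN : 0 < 1 / (2 * (3 + 2 * l)) := one_div_pos.2 (by linarith)
    have hσ := mul_nonneg (by linarith : 0 ≤ k)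
      (sigmaFun_nonneg hφ (by linarith : -(3 / 2) < l) hη.1.le)
    linarith [hgrowth η hη]
  have hσ (η : ℝ) (hη : η ∈ Ioc 0 ηch) : 0 < sigmaFun φ l η :=
    sigmaFun_pos_of_deriv_pos hφ (by linarith) hη.1 fun x hx ↦
      hderiv x ⟨hx.1, hx.2.trans hη.2⟩
  have hσ' (η : ℝ) (hη : η ∈ Ioc 0 ηch) : DifferentiableAt ℝ (sigmaFun φ l) η :=
    differentiableAt_of_deriv_ne_zero (hderiv η hη).ne'
  have hIoc (r : ℝ) (hr : 0 < r) : ηf r ∈ Ioc 0 ηch :=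
    ⟨(hmem r hr).1, (hmem r hr).2.trans hηch.le⟩
  have hσc : Tendsto (fun r ↦ sigmaFun φ l (ηf r)) (𝓝[>] 0) (𝓝 (sigmaFun φ l ηc)) :=
    (hσ' ηc ⟨hηc₀, hηch.le⟩).continuousAt.tendsto.comp hηc
  exact (hsol.isLogOrbit hl hφ hφint (fun r hr ↦ hσ _ (hIoc r hr)) (fun r hr ↦ hσ' _ (hIoc r hr))
    fun r hr ↦ hgrowth _ (hIoc r hr)).not_tendsto_centre (by linarith) hk hkl
    (hσc.comp tendsto_exp_atBot_nhdsGT) ⟨hu.comp tendsto_exp_atBot_nhdsGT,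
      tendsto_logV_atBot hm hσc (hσ ηc ⟨hηc₀, hηch.le⟩).ne'⟩

/-- With `k = 3+2l+1/2` for `l ≥ -3/4` and `k = 2` for `-1 < l < -3/4`:
if there is `η̌ > 0` with `σ' ≥ 1/(2(3+2l)) + k σ` on `(0,η̌]`, then every regular
solution of the static Einstein–Vlasov equations whose central potential value
`η_c` satisfies `η_c < η̌` has finite radius and finite mass: its maximal interval
of definition is `(0,R)` with `R < ∞` and `sup m < ∞`. -/
theorem stmt1
    (l : ℝ) (hl : -1 < l)
    (φ : ℝ → ℝ)
    (hφcont : ContinuousOn φ (Ioo 0 1))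
    (hφnonneg : ∀ x ∈ Ioo (0:ℝ) 1, 0 ≤ φ x)
    (hφne : ∃ x ∈ Ioo (0:ℝ) 1, φ x ≠ 0)
    (hφbound : ∃ C > (0:ℝ), ∃ ε > (0:ℝ), ∃ δ ∈ Ioo (0:ℝ) 1,
      ∀ x ∈ Ioo (1 - δ) 1, φ x ≤ C * (1 - x) ^ (-1 + ε))
    (hφholder : l < -(1/2) → ∃ α > -l - 1/2, ∃ Cα > (0:ℝ),
      ∀ x ∈ Ioo (0:ℝ) 1, ∀ y ∈ Ioo (0:ℝ) 1, |φ x - φ y| ≤ Cα * |x - y| ^ α)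
    (k₁ k₂ : ℝ) (hk₁ : 0 < k₁) (hk₁₂ : k₁ < k₂)
    (hσ'near : ∃ η₀ > (0:ℝ), ∀ η ∈ Ioo (0:ℝ) η₀, deriv (sigmaFun φ l) η ∈ Ioo k₁ k₂)
    (k : ℝ) (hk : k = if -(3/4) ≤ l then 3 + 2 * l + 1 / 2 else 2)
    (ηch : ℝ) (hηch : 0 < ηch)
    (hmain : ∀ η : ℝ, 0 < η → η ≤ ηch →
      1 / (2 * (3 + 2 * l)) + k * sigmaFun φ l η ≤ deriv (sigmaFun φ l) η)
    (R : EReal) (hR : (0 : EReal) < R)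
    (m ηf : ℝ → ℝ)
    (hsol : IsEVSolution φ l m ηf 0 R)
    (hmax : ∀ R' : EReal, R < R' → ∀ m' ηf' : ℝ → ℝ,
      (∀ r : ℝ, 0 < r → (r : EReal) < R → m' r = m r ∧ ηf' r = ηf r) →
      ¬ IsEVSolution φ l m' ηf' 0 R')
    -- regularity at the center
    (ηc : ℝ) (hηcpos : 0 < ηc)
    (hηclim : Tendsto ηf (nhdsWithin 0 (Ioi 0)) (nhds ηc))
    (hmlim : Tendsto (fun r => m r / r) (nhdsWithin 0 (Ioi 0)) (nhds 0))
    (hulim : Tendsto (fun r => 4 * Real.pi * r ^ 3 * rhoFun φ l r (ηf r) / m r)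
      (nhdsWithin 0 (Ioi 0)) (nhds (3 + 2 * l)))
    (hηcsmall : ηc < ηch) :
    R < ⊤ ∧ ∃ Mb : ℝ, ∀ r : ℝ, 0 < r → (r : EReal) < R → m r ≤ Mb := by
  obtain ⟨C, -, ε, hε, δ, hδ, hbound⟩ := hφbound
  have hO := isBigO_sub_rpow_of_le (sub_lt_self 1 hδ.1)
    (fun x hx ↦ hφnonneg x ⟨(sub_pos.2 hδ.2).trans hx.1, hx.2⟩) hbound
  have hφint (b : ℝ) (hb : b ∈ Ioo (0 : ℝ) 1) : IntegrableOn φ (Ioo b 1) :=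
    integrableOn_Ioo_of_isBigO_rpow (hφcont.mono fun x hx ↦ ⟨hb.1.trans_le hx.1, hx.2⟩)
      (by linarith) hO
  exact stmt1_general hl hφnonneg hφint (by rw [hk]; split_ifs <;> linarith)
    (by rw [hk]; split_ifs <;> linarith) (fun η hη ↦ hmain η hη.1 hη.2) hsol hηclim hmlim hulim
    hηcsmall
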